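/- Suppose p > 0, k⊥ ≥ 0, ρ > 0 with (p − 1)² + k⊥² > 1, and set ρ_D := ((p² + k⊥²)² − 4p²)/8. Then ρ_D > 0 and T² − 4D > 0 (the roots of the quadratic X² − TX + D are always real); moreover, if ρ < ρ_D then T > 0 and D > 0 (two positive real roots: stable oscillation), while if ρ > ρ_D then D < 0 (one positive and one negative real root: Jeans instability). -/

import Mathlib

/-!
Put `a = p²` and `b = (p² + k²)² / 4`. The condition `(p - 1)² + k² > 1` says `p² + k² > 2p`,
so for `p > 0` it gives `b > a`, that is, `ρ_D = (b - a) / 2 > 0`. The remaining claims follow from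
`T² - 4D = 4 ((ρ - 2a)² + 4a (b - a))`, `T = 2 (a + b - ρ)` and `D = 2 (b - a) (ρ_D - ρ)`.
-/

/-- The trace `T(p,k⊥,ρ) = 2(p² + k⁴/4 − ρ)` of the two-component dispersion
quadratic, with `k² = p² + k⊥²`. -/
noncomputable def dispT (p k ρ : ℝ) : ℝ := 2 * (p ^ 2 + (p ^ 2 + k ^ 2) ^ 2 / 4 - ρ)

/-- The determinant `D(p,k⊥,ρ) = (p² − k⁴/4)(p² − k⁴/4 + 2ρ)` of the two-component
dispersion quadratic, with `k² = p² + k⊥²`. -/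
noncomputable def dispD (p k ρ : ℝ) : ℝ :=
  (p ^ 2 - (p ^ 2 + k ^ 2) ^ 2 / 4) * (p ^ 2 - (p ^ 2 + k ^ 2) ^ 2 / 4 + 2 * ρ)

/-- The outside-the-circles case of the stability classification Eq. (E9): for
`(p−1)² + k⊥² > 1` the threshold `ρ_D = ((p²+k⊥²)² − 4p²)/8` is positive, the roots
of the dispersion quadratic are always real (`T² − 4D > 0`), and `ρ < ρ_D` gives
stable oscillation (`T > 0`, `D > 0`) while `ρ > ρ_D` gives Jeans instability
(`D < 0`). -/
theorem two_component_stability_outside_circle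
    (p k ρ : ℝ) (hp : 0 < p) (hk : 0 ≤ k) (hρ : 0 < ρ)
    (hcirc : 1 < (p - 1) ^ 2 + k ^ 2) :
    0 < ((p ^ 2 + k ^ 2) ^ 2 - 4 * p ^ 2) / 8 ∧
    0 < dispT p k ρ ^ 2 - 4 * dispD p k ρ ∧
    (ρ < ((p ^ 2 + k ^ 2) ^ 2 - 4 * p ^ 2) / 8 →
      0 < dispT p k ρ ∧ 0 < dispD p k ρ) ∧
    (((p ^ 2 + k ^ 2) ^ 2 - 4 * p ^ 2) / 8 < ρ → dispD p k ρ < 0) := by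
  have hK : 2 * p < p ^ 2 + k ^ 2 := by linarith [sub_sq p 1]
  have ha : 0 < p ^ 2 := by positivity
  have hab : p ^ 2 < (p ^ 2 + k ^ 2) ^ 2 / 4 := by nlinarith
  unfold dispT dispD
  generalize hb : (p ^ 2 + k ^ 2) ^ 2 = c at *
  generalize p ^ 2 = a at *
  refine ⟨by linarith, ?_, fun h => ⟨by linarith, ?_⟩, fun h => ?_⟩
  · have h4 : 0 < a * (c / 4 - a) := mul_pos ha (by linarith)
    linarith [sq_nonneg (ρ - 2 * a)]
  · exact mul_pos_of_neg_of_neg (by linarith) (by linarith)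
  · exact mul_neg_of_neg_of_pos (by linarith) (by linarith)
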